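/- arXiv:1901.03785 — 3 statements merged into one kernel-verified Lean document; each statement's English description precedes it below -/
import Mathlib

section
/- Fix an integer k ≥ 1 and a real constant A > 0, and define the lower trend T(x) = (A·x/Li_k(x))·log(Li_k(x)/A) and the upper trend T̄(x) = A·(log x)^k·log(x/(A·(log x)^k)). Then lim_{x→∞} (T̄(x) − T(x)) / (A·(log x)^k) = k; in particular T̄(x) − T(x) = O((log x)^k). -/
/-!
Write `L = log x` and let `g_m(x) = Li_m(x) · L^m / x` be the ratio of `Li_m` to its leading term.
Integration by parts gives `Li_m(x) = x / L^m - 2 / (log 2)^m + m · Li_{m+1}(x)`, that is,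
`(g_m - 1) · L = m · g_{m+1} - O(L^{m+1} / x)`. A comparison of `1 / L^m` with the derivative of
`2x / L^m` shows that every `g_m` is bounded, so `g_m → 1`, and then `(g_m - 1) · L → m`.

The normalised difference of the two trends equals
`((g_k - 1) · L) / g_k · (log (x / (A L^k)) / L) - log g_k / g_k`,
and the second factor tends to `1` because `log L = o(L)`; hence the limit is `k`.
-/

open Filter

/-- `Li k x = ∫_2^x dt / (log t)^k`. -/
noncomputable def Li (k : ℕ) (x : ℝ) : ℝ := ∫ t in (2:ℝ)..x, 1 / (Real.log t) ^ k

/-- Lower trend `T(x) = (A·x/Li_k(x))·log(Li_k(x)/A)`. -/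
noncomputable def lowerTrend (k : ℕ) (A : ℝ) (x : ℝ) : ℝ :=
  A * x / Li k x * Real.log (Li k x / A)

/-- Upper trend `T̄(x) = A·(log x)^k·log(x/(A·(log x)^k))`. -/
noncomputable def upperTrend (k : ℕ) (A : ℝ) (x : ℝ) : ℝ :=
  A * (Real.log x) ^ k * Real.log (x / (A * (Real.log x) ^ k))

/-- The ratio of `Li m x` to its leading term `x / (log x) ^ m`. -/
noncomputable def liRatio (m : ℕ) (x : ℝ) : ℝ := Li m x * Real.log x ^ m / x

lemma hasDerivAt_div_log_pow (m : ℕ) {t : ℝ} (ht : 1 < t) :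
    HasDerivAt (fun x : ℝ => x / Real.log x ^ m)
      (1 / Real.log t ^ m - m * (1 / Real.log t ^ (m + 1))) t := by
  have hL : Real.log t ≠ 0 := (Real.log_pos ht).ne'
  have ht0 : t ≠ 0 := by linarith
  have h := (hasDerivAt_id t).div ((Real.hasDerivAt_log ht0).pow m) (pow_ne_zero m hL)
  refine h.congr_deriv ?_
  rcases m with _ | m
  · simp
  · simp only [id, Pi.pow_apply, Nat.add_sub_cancel]
    field_simp
    ring

lemma intervalIntegrable_one_div_log_pow (m : ℕ) {a b : ℝ} (ha : 1 < a) (hb : 1 < b) :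
    IntervalIntegrable (fun t : ℝ => 1 / Real.log t ^ m) MeasureTheory.volume a b := by
  refine ContinuousOn.intervalIntegrable fun t ht => ContinuousAt.continuousWithinAt ?_
  have h1 : 1 < t := lt_of_lt_of_le (lt_min ha hb) ht.1
  have hL : Real.log t ≠ 0 := (Real.log_pos h1).ne'
  have ht0 : t ≠ 0 := by linarith
  exact continuousAt_const.div ((Real.continuousAt_log ht0).pow m) (pow_ne_zero m hL)

lemma integral_deriv_div_log_pow (m : ℕ) {a b : ℝ} (ha : 1 < a) (hb : 1 < b) :
    ∫ t in a..b, (1 / Real.log t ^ m - m * (1 / Real.log t ^ (m + 1)))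
      = b / Real.log b ^ m - a / Real.log a ^ m := by
  refine intervalIntegral.integral_eq_sub_of_hasDerivAt
    (f := fun x : ℝ => x / Real.log x ^ m) (fun t ht => ?_) ?_
  · exact hasDerivAt_div_log_pow m (lt_of_lt_of_le (lt_min ha hb) ht.1)
  · exact (intervalIntegrable_one_div_log_pow m ha hb).sub
      ((intervalIntegrable_one_div_log_pow (m + 1) ha hb).const_mul _)

/-- Integration by parts. -/
lemma Li_eq (m : ℕ) {x : ℝ} (hx : 1 < x) :
    Li m x = x / Real.log x ^ m - 2 / Real.log 2 ^ m + m * Li (m + 1) x := by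
  have h := integral_deriv_div_log_pow m (a := 2) (by norm_num) hx
  rw [intervalIntegral.integral_sub (intervalIntegrable_one_div_log_pow m (by norm_num) hx)
    ((intervalIntegrable_one_div_log_pow (m + 1) (by norm_num) hx).const_mul _),
    intervalIntegral.integral_const_mul] at h
  unfold Li
  linarith

lemma Li_nonneg (m : ℕ) {x : ℝ} (hx : 2 ≤ x) : 0 ≤ Li m x := by
  refine intervalIntegral.integral_nonneg hx fun t ht => ?_
  have : 0 ≤ Real.log t := Real.log_nonneg (by linarith [ht.1])
  positivity

/-- Once `log t ≥ 2m`, the integrand `1 / (log t) ^ m` is at most the derivative of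
`2t / (log t) ^ m`. -/
lemma exists_Li_le (m : ℕ) :
    ∃ C : ℝ, ∀ᶠ x : ℝ in atTop, Li m x ≤ 2 * (x / Real.log x ^ m) + C := by
  set a : ℝ := max 2 (Real.exp (2 * m)) with ha
  have ha2 : 2 ≤ a := le_max_left _ _
  refine ⟨Li m a - 2 * (a / Real.log a ^ m), ?_⟩
  filter_upwards [eventually_ge_atTop a] with x hx
  have ha1 : 1 < a := by linarith
  have hx1 : 1 < x := by linarith
  have hi := intervalIntegrable_one_div_log_pow m ha1 hx1
  have hi' := intervalIntegrable_one_div_log_pow (m + 1) ha1 hx1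
  have hsplit : Li m x = Li m a + ∫ t in a..x, 1 / Real.log t ^ m :=
    (intervalIntegral.integral_add_adjacent_intervals
      (intervalIntegrable_one_div_log_pow m (by norm_num) ha1) hi).symm
  have hle : ∫ t in a..x, 1 / Real.log t ^ m ≤
      ∫ t in a..x, 2 * (1 / Real.log t ^ m - m * (1 / Real.log t ^ (m + 1))) := by
    refine intervalIntegral.integral_mono_on hx hi ((hi.sub (hi'.const_mul _)).const_mul _) ?_
    intro t ht
    have ht1 : 1 < t := by linarith [ht.1]
    have hL : 0 < Real.log t := Real.log_pos ht1
    have hm : 2 * (m : ℝ) ≤ Real.log t := by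
      rw [Real.le_log_iff_exp_le (by linarith)]
      exact (le_max_right _ _).trans ht.1
    have key : 2 * ((m : ℝ) * (1 / Real.log t ^ (m + 1))) ≤ 1 / Real.log t ^ m := by
      have : 2 * ((m : ℝ) * (1 / Real.log t ^ (m + 1)))
          = (2 * m / Real.log t) * (1 / Real.log t ^ m) := by
        field_simp
        ring
      rw [this]
      exact mul_le_of_le_one_left (by positivity) ((div_le_one hL).2 hm)
    linarith
  rw [intervalIntegral.integral_const_mul, integral_deriv_div_log_pow m ha1 hx1] at hle
  linarith

lemma tendsto_log_pow_div (m : ℕ) :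
    Tendsto (fun x : ℝ => Real.log x ^ m / x) atTop (nhds 0) := by
  simpa using Real.tendsto_pow_log_div_mul_add_atTop 1 0 m one_ne_zero

lemma liRatio_bounded (m : ℕ) : ∃ C : ℝ, ∀ᶠ x : ℝ in atTop, |liRatio m x| ≤ C := by
  obtain ⟨C, hC⟩ := exists_Li_le m
  refine ⟨2 + |C|, ?_⟩
  filter_upwards [hC, eventually_ge_atTop 2,
    (tendsto_log_pow_div m).eventually (ge_mem_nhds one_pos)] with x hx hx2 hx3
  have hL : 0 < Real.log x := Real.log_pos (by linarith)
  have hx0 : 0 < x := by linarith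
  have hq : 0 ≤ Real.log x ^ m / x := by positivity
  have heq : liRatio m x = Li m x * (Real.log x ^ m / x) := mul_div_assoc _ _ _
  rw [heq, abs_of_nonneg (mul_nonneg (Li_nonneg m hx2) hq)]
  calc Li m x * (Real.log x ^ m / x)
      ≤ (2 * (x / Real.log x ^ m) + |C|) * (Real.log x ^ m / x) := by
        gcongr
        exact hx.trans (by gcongr; exact le_abs_self C)
    _ = 2 + |C| * (Real.log x ^ m / x) := by field_simp
    _ ≤ 2 + |C| := by
        gcongr
        exact mul_le_of_le_one_right (abs_nonneg C) hx3

/-- `Li_eq` in normalised form. -/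
lemma liRatio_sub_one_mul_log (m : ℕ) {x : ℝ} (hx : 1 < x) :
    (liRatio m x - 1) * Real.log x =
      m * liRatio (m + 1) x - 2 / Real.log 2 ^ m * (Real.log x ^ (m + 1) / x) := by
  have hL : Real.log x ≠ 0 := (Real.log_pos hx).ne'
  have hx0 : x ≠ 0 := by linarith
  have h2 : Real.log 2 ≠ 0 := (Real.log_pos (by norm_num)).ne'
  unfold liRatio
  rw [Li_eq m hx]
  field_simp
  ring

lemma tendsto_liRatio (m : ℕ) : Tendsto (liRatio m) atTop (nhds 1) := by
  obtain ⟨C, hC⟩ := liRatio_bounded (m + 1)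
  have hinv : Tendsto (fun x : ℝ => (Real.log x)⁻¹) atTop (nhds 0) :=
    Real.tendsto_log_atTop.inv_tendsto_atTop
  have h1 : Tendsto (fun x : ℝ => (Real.log x)⁻¹ * liRatio (m + 1) x) atTop (nhds 0) :=
    hinv.zero_mul_isBoundedUnder_le ⟨C, by simpa using hC⟩
  have h2 := ((h1.const_mul (m : ℝ)).sub
    ((hinv.mul (tendsto_log_pow_div (m + 1))).const_mul (2 / Real.log 2 ^ m))).add_const 1
  simp only [mul_zero, sub_zero, zero_add] at h2
  refine h2.congr' ?_
  filter_upwards [eventually_gt_atTop 1] with x hx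
  have hL : Real.log x ≠ 0 := (Real.log_pos hx).ne'
  have h := liRatio_sub_one_mul_log m hx
  have h' : liRatio m x = (Real.log x)⁻¹ * ((liRatio m x - 1) * Real.log x) + 1 := by
    field_simp
    ring
  rw [h', h]
  ring

lemma tendsto_liRatio_sub_one_mul_log (m : ℕ) :
    Tendsto (fun x : ℝ => (liRatio m x - 1) * Real.log x) atTop (nhds (m : ℝ)) := by
  have h := ((tendsto_liRatio (m + 1)).const_mul (m : ℝ)).sub
    ((tendsto_log_pow_div (m + 1)).const_mul (2 / Real.log 2 ^ m))
  simp only [mul_one, mul_zero, sub_zero] at h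
  refine h.congr' ?_
  filter_upwards [eventually_gt_atTop 1] with x hx
  exact (liRatio_sub_one_mul_log m hx).symm

lemma log_main_term (k : ℕ) {A x : ℝ} (hA : 0 < A) (hx : 1 < x) :
    Real.log (x / (A * Real.log x ^ k)) =
      Real.log x - Real.log A - k * Real.log (Real.log x) := by
  have hL : 0 < Real.log x := Real.log_pos hx
  rw [Real.log_div (by linarith) (by positivity), Real.log_mul hA.ne' (by positivity),
    Real.log_pow]
  ring

lemma tendsto_log_main_term_div (k : ℕ) {A : ℝ} (hA : 0 < A) :
    Tendsto (fun x : ℝ => Real.log (x / (A * Real.log x ^ k)) / Real.log x) atTop (nhds 1) := by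
  have hinv : Tendsto (fun x : ℝ => (Real.log x)⁻¹) atTop (nhds 0) :=
    Real.tendsto_log_atTop.inv_tendsto_atTop
  have hll : Tendsto (fun x : ℝ => Real.log (Real.log x) / Real.log x) atTop (nhds 0) := by
    simpa [Function.comp_def] using (tendsto_log_pow_div 1).comp Real.tendsto_log_atTop
  have h := ((hinv.const_mul (Real.log A)).const_sub 1).sub (hll.const_mul (k : ℝ))
  simp only [mul_zero, sub_zero] at h
  refine h.congr' ?_
  filter_upwards [eventually_gt_atTop 1] with x hx
  have hL : Real.log x ≠ 0 := (Real.log_pos hx).ne'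
  rw [log_main_term k hA hx]
  field_simp

theorem stmt5 (k : ℕ) (hk : 1 ≤ k) (A : ℝ) (hA : 0 < A) :
    Tendsto
      (fun x : ℝ => (upperTrend k A x - lowerTrend k A x) / (A * (Real.log x) ^ k))
      atTop (nhds (k : ℝ)) := by
  have hg := tendsto_liRatio k
  have hlog : Tendsto (fun x => Real.log (liRatio k x)) atTop (nhds 0) := by
    simpa using hg.log one_ne_zero
  have h := (((tendsto_liRatio_sub_one_mul_log k).div hg one_ne_zero).mul
    (tendsto_log_main_term_div k hA)).sub (hlog.div hg one_ne_zero)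
  simp only [div_one, mul_one, sub_zero] at h
  refine h.congr' ?_
  filter_upwards [eventually_gt_atTop 1, hg.eventually (lt_mem_nhds one_pos)] with x hx hpos
  have hL : 0 < Real.log x := Real.log_pos hx
  have hx0 : 0 < x := by linarith
  have hLi : Li k x = liRatio k x * (x / Real.log x ^ k) := by
    unfold liRatio
    field_simp
  have hlogLi : Real.log (Li k x / A) =
      Real.log (liRatio k x) + Real.log (x / (A * Real.log x ^ k)) := by
    rw [← Real.log_mul hpos.ne' (by positivity), hLi]
    congr 1
    field_simp
  simp only [Pi.div_apply]
  unfold upperTrend lowerTrend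
  rw [hlogLi, hLi]
  generalize Real.log (x / (A * Real.log x ^ k)) = M
  generalize Real.log (liRatio k x) = N
  generalize liRatio k x = g at *
  field_simp
  ring
end

section
/- For every integer k ≥ 1 and every real x ≥ 2, the closed-form identity Li_{k+1}(x) = (1/k!)·[ Li_1(x) − (x/(log x)^k)·Σ_{j=1}^{k} (k−j)!·(log x)^{j−1} + (2/(log 2)^k)·Σ_{j=1}^{k} (k−j)!·(log 2)^{j−1} ] holds, where Li_1(x) = ∫_2^x dt/log t. -/
/-- The sum `Σ_{j=1}^{k} (k−j)!·y^{j−1}`, written with `j−1` reindexed as `j ∈ range k`. -/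
noncomputable def trailSum (k : ℕ) (y : ℝ) : ℝ :=
  ∑ j ∈ Finset.range k, (Nat.factorial (k - 1 - j) : ℝ) * y ^ j

theorem trailSum_succ (k : ℕ) (y : ℝ) :
    trailSum (k + 1) y = y * trailSum k y + (Nat.factorial k : ℝ) := by
  unfold trailSum
  rw [Finset.sum_range_succ', Finset.mul_sum]
  congr 1
  · refine Finset.sum_congr rfl fun j _ => ?_
    rw [show k + 1 - 1 - (j + 1) = k - 1 - j by omega]
    ring
  · simp

theorem log_pos_of_mem_uIcc {x t : ℝ} (hx : 2 ≤ x) (ht : t ∈ Set.uIcc 2 x) :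
    0 < Real.log t := by
  rw [Set.uIcc_of_le hx] at ht
  exact Real.log_pos (by linarith [ht.1])

theorem intervalIntegrable_inv_log_pow (k : ℕ) {x : ℝ} (hx : 2 ≤ x) :
    IntervalIntegrable (fun t => 1 / (Real.log t) ^ k) MeasureTheory.volume 2 x := by
  refine ContinuousOn.intervalIntegrable fun t ht => ContinuousAt.continuousWithinAt ?_
  have hl := log_pos_of_mem_uIcc hx ht
  have ht0 : t ≠ 0 := by rintro rfl; simp at hl
  exact continuousAt_const.div ((Real.continuousAt_log ht0).pow k) (pow_pos hl k).ne'

/-- The recurrence linking `Li (k + 2)` and `Li (k + 1)`, by the fundamental theorem of calculus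
for `t / (log t) ^ (k + 1)`. -/
theorem Li_recurrence (k : ℕ) {x : ℝ} (hx : 2 ≤ x) :
    ((k : ℝ) + 1) * Li (k + 2) x =
      Li (k + 1) x - x / (Real.log x) ^ (k + 1) + 2 / (Real.log 2) ^ (k + 1) := by
  have hderiv : ∀ t ∈ Set.uIcc 2 x, HasDerivAt (fun t => t / (Real.log t) ^ (k + 1))
      (1 / (Real.log t) ^ (k + 1) - ((k : ℝ) + 1) * (1 / (Real.log t) ^ (k + 2))) t := by
    intro t ht
    have hl := log_pos_of_mem_uIcc hx ht
    have ht0 : t ≠ 0 := by rintro rfl; simp at hl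
    have h := (hasDerivAt_id' t).fun_div ((Real.hasDerivAt_log ht0).fun_pow (k + 1))
      (pow_pos hl (k + 1)).ne'
    refine h.congr_deriv ?_
    have hl' := hl.ne'
    push_cast
    field_simp
    ring
  have hi := intervalIntegrable_inv_log_pow (k + 1) hx
  have hj := (intervalIntegrable_inv_log_pow (k + 2) hx).const_mul ((k : ℝ) + 1)
  have h := intervalIntegral.integral_eq_sub_of_hasDerivAt hderiv (hi.sub hj)
  rw [intervalIntegral.integral_sub hi hj, intervalIntegral.integral_const_mul] at h
  unfold Li
  linarith

/-- The closed form with the factorial cleared; it also holds for `k = 0`, where it is trivial,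
so the induction starts there. -/
theorem factorial_mul_Li (k : ℕ) {x : ℝ} (hx : 2 ≤ x) :
    (Nat.factorial k : ℝ) * Li (k + 1) x =
      Li 1 x - x / (Real.log x) ^ k * trailSum k (Real.log x)
        + 2 / (Real.log 2) ^ k * trailSum k (Real.log 2) := by
  induction k with
  | zero => simp [trailSum]
  | succ k ih =>
    have hstep : ∀ a y : ℝ, y ≠ 0 → a / y ^ (k + 1) * trailSum (k + 1) y =
        a / y ^ k * trailSum k y + (Nat.factorial k : ℝ) * (a / y ^ (k + 1)) := by
      intro a y hy
      rw [trailSum_succ]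
      field_simp
      ring
    rw [hstep x _ (Real.log_pos (by linarith)).ne',
      hstep 2 _ (Real.log_pos (by norm_num)).ne', Nat.factorial_succ]
    push_cast
    linear_combination (Nat.factorial k : ℝ) * Li_recurrence k hx + ih

theorem stmt8 (k : ℕ) (hk : 1 ≤ k) (x : ℝ) (hx : 2 ≤ x) :
    Li (k + 1) x =
      (1 / (Nat.factorial k : ℝ)) *
        (Li 1 x - x / (Real.log x) ^ k * trailSum k (Real.log x)
          + 2 / (Real.log 2) ^ k * trailSum k (Real.log 2)) := by
  rw [← factorial_mul_Li k hx, ← mul_assoc, one_div,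
    inv_mul_cancel₀ (Nat.cast_ne_zero.mpr (Nat.factorial_ne_zero k)), one_mul]
end

section
/- For all real numbers a and x with 1 < a ≤ x, the logarithmic integral satisfies ∫_a^x dt/log t = (log(log x) + Σ_{n=1}^{∞} (log x)^n/(n·n!)) − (log(log a) + Σ_{n=1}^{∞} (log a)^n/(n·n!)); in particular the series Σ_{n=1}^{∞} (log x)^n/(n·n!) converges for every x > 1. -/
/-!
The function `Ein y = ∑ yⁿ⁺¹ / ((n+1) (n+1)!)` is entire, and differentiating it term by term gives
`y * Ein' y = exp y - 1`. Hence `log (log t) + Ein (log t)` has derivative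
`(1 + (exp (log t) - 1)) / (t log t) = 1 / log t` on `(1, ∞)`, and the formula is the fundamental
theorem of calculus.
-/

/-- The series `Σ_{n=1}^∞ (log x)^n / (n·n!)`, indexed by `n+1` for `n : ℕ`. -/
noncomputable def liSeries (x : ℝ) : ℝ :=
  ∑' n : ℕ, (Real.log x) ^ (n + 1) / (((n + 1 : ℕ) : ℝ) * (Nat.factorial (n + 1) : ℝ))

/-- The series `liSeries x`, written as a function of `y = log x`. -/
noncomputable def einSeries (y : ℝ) : ℝ :=
  ∑' n : ℕ, y ^ (n + 1) / (((n + 1 : ℕ) : ℝ) * (Nat.factorial (n + 1) : ℝ))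

theorem summable_ein (y : ℝ) : Summable (fun n : ℕ =>
    y ^ (n + 1) / (((n + 1 : ℕ) : ℝ) * (Nat.factorial (n + 1) : ℝ))) := by
  have h := (summable_nat_add_iff 1).2 (Real.summable_pow_div_factorial |y|)
  refine Summable.of_norm_bounded h fun n => ?_
  rw [Real.norm_eq_abs, abs_div, abs_pow, abs_of_nonneg (by positivity :
    (0 : ℝ) ≤ ((n + 1 : ℕ) : ℝ) * (Nat.factorial (n + 1) : ℝ))]
  gcongr
  have h1 : (1 : ℝ) ≤ ((n + 1 : ℕ) : ℝ) := by exact_mod_cast Nat.succ_pos n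
  exact le_mul_of_one_le_left (by positivity) h1

theorem tsum_pow_div_factorial_succ {y : ℝ} (hy : y ≠ 0) :
    ∑' n : ℕ, y ^ n / (Nat.factorial (n + 1) : ℝ) = (Real.exp y - 1) / y := by
  have h := (Real.summable_pow_div_factorial y).tsum_eq_zero_add
  have hexp : ∑' n : ℕ, y ^ n / (Nat.factorial n : ℝ) = Real.exp y := by
    rw [Real.exp_eq_exp_ℝ, NormedSpace.exp_eq_tsum_div]
  have h2 : ∑' n : ℕ, y ^ (n + 1) / (Nat.factorial (n + 1) : ℝ)
      = y * ∑' n : ℕ, y ^ n / (Nat.factorial (n + 1) : ℝ) := by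
    rw [← tsum_mul_left]
    exact tsum_congr fun n => by ring
  rw [hexp, h2] at h
  rw [eq_div_iff hy, h]
  simp
  ring

theorem hasDerivAt_einSeries {y : ℝ} (hy : y ≠ 0) :
    HasDerivAt einSeries ((Real.exp y - 1) / y) y := by
  rw [← tsum_pow_div_factorial_succ hy]
  -- On the ball of radius `|y| + 1` the derivatives are dominated by the exponential series.
  refine hasDerivAt_tsum_of_isPreconnected (Real.summable_pow_div_factorial (|y| + 1))
    (Metric.isOpen_ball (x := (0 : ℝ)) (ε := |y| + 1)) (convex_ball _ _).isPreconnected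
    (g' := fun n z => z ^ n / (Nat.factorial (n + 1) : ℝ))
    ?_ ?_ (y₀ := y) (by simp) (summable_ein y) (by simp)
  · intro n z _
    have h := (hasDerivAt_pow (n + 1) z).div_const
      (((n + 1 : ℕ) : ℝ) * (Nat.factorial (n + 1) : ℝ))
    refine h.congr_deriv ?_
    have : (((n + 1 : ℕ) : ℝ)) ≠ 0 := by positivity
    rw [show n + 1 - 1 = n from rfl, mul_div_mul_left _ _ this]
  · intro n z hz
    have hz' : |z| ≤ |y| + 1 := by
      have := (Metric.mem_ball.1 hz).le
      rwa [Real.dist_eq, sub_zero] at this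
    rw [Real.norm_eq_abs, abs_div, abs_pow, Nat.abs_cast]
    gcongr
    exact Nat.le_succ n

theorem hasDerivAt_logIntegral {t : ℝ} (ht : 1 < t) :
    HasDerivAt (fun t => Real.log (Real.log t) + liSeries t) (1 / Real.log t) t := by
  have h0 : 0 < t := by linarith
  have hl : 0 < Real.log t := Real.log_pos ht
  have h1 := Real.hasDerivAt_log h0.ne'
  have h2 : HasDerivAt liSeries ((Real.exp (Real.log t) - 1) / Real.log t * t⁻¹) t :=
    (hasDerivAt_einSeries hl.ne').comp t h1
  refine ((h1.log hl.ne').add h2).congr_deriv ?_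
  rw [Real.exp_log h0]
  field_simp
  ring

theorem stmt9 :
    (∀ x : ℝ, 1 < x →
      Summable (fun n : ℕ =>
        (Real.log x) ^ (n + 1) / (((n + 1 : ℕ) : ℝ) * (Nat.factorial (n + 1) : ℝ)))) ∧
    (∀ a x : ℝ, 1 < a → a ≤ x →
      (∫ t in a..x, 1 / Real.log t) =
        (Real.log (Real.log x) + liSeries x) - (Real.log (Real.log a) + liSeries a)) := by
  refine ⟨fun x _ => summable_ein _, fun a x ha hax => ?_⟩
  have hgt : ∀ t ∈ Set.uIcc a x, 1 < t := fun t ht => by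
    rw [Set.uIcc_of_le hax] at ht
    exact ha.trans_le ht.1
  refine intervalIntegral.integral_eq_sub_of_hasDerivAt
    (fun t ht => hasDerivAt_logIntegral (hgt t ht)) ?_
  refine ContinuousOn.intervalIntegrable fun t ht => ContinuousAt.continuousWithinAt ?_
  have h1 := hgt t ht
  exact continuousAt_const.div (Real.continuousAt_log (by linarith)) (Real.log_pos h1).ne'
end
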